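/- arXiv:2012.12623 — 2 statements merged into one kernel-verified Lean document; each statement's English description precedes it below -/
import Mathlib

section
/- For every integer n ≥ 0, the sum Σ_{k=0}^{n} f_n(k) equals (1 + (−1)^n)/2; that is, it equals 1 if n is even and 0 if n is odd. -/
/-- `f_n(k) = (−1)^k · 2^{n−k} · (3n−3k+2) · C_{n−k} · (n+k+1)!·(2n−k+1)! / (k!·(3n−k+2)!)`,
where `C_m` is the `m`-th Catalan number. -/
def fnk (n k : ℕ) : ℚ :=
  (-1)^k * 2^(n-k) * (3*(n:ℚ) - 3*(k:ℚ) + 2) * (catalan (n-k) : ℚ) *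
    (Nat.factorial (n+k+1) : ℚ) * (Nat.factorial (2*n-k+1) : ℚ) /
    ((Nat.factorial k : ℚ) * (Nat.factorial (3*n-k+2) : ℚ))

/-!
In the coordinates `(k, m)` with `m = n - k`, the sum runs over an antidiagonal. The summand has a
Wilf–Zeilberger partner `H` with `f (k + 1, m) - f (k, m) = H (k + 1, m) - H (k, m + 1)` that agrees
with `f` at `k = 0`. Hence passing from the antidiagonal `n` to the antidiagonal `n + 1` adds
exactly `H (n + 1, 0) = (-1) ^ (n + 1)`, and the sum is `1 - 1 + 1 - ⋯ + (-1) ^ n`.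
-/

open Finset
open scoped Nat

theorem sum_antidiagonal_eq_sum_range_of_wz {M : Type*} [AddCommGroup M] {F H : ℕ → ℕ → M}
    (wz : ∀ k m, F (k + 1) m - F k m = H (k + 1) m - H k (m + 1))
    (boundary : ∀ m, F 0 m = H 0 m) (n : ℕ) :
    ∑ p ∈ antidiagonal n, F p.1 p.2 = ∑ j ∈ range (n + 1), H j 0 := by
  induction n with
  | zero => simp [boundary]
  | succ n ih =>
    have telescope : H 0 (n + 1) + ∑ p ∈ antidiagonal n, (H (p.1 + 1) p.2 - H p.1 (p.2 + 1)) =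
        H (n + 1) 0 := by
      rw [sum_sub_distrib, ← add_sub_assoc, sub_eq_iff_eq_add,
        ← Nat.sum_antidiagonal_succ (f := fun p ↦ H p.1 p.2), Nat.sum_antidiagonal_succ']
    calc ∑ p ∈ antidiagonal (n + 1), F p.1 p.2
        = F 0 (n + 1) + ∑ p ∈ antidiagonal n, F (p.1 + 1) p.2 := Nat.sum_antidiagonal_succ
      _ = ∑ p ∈ antidiagonal n, F p.1 p.2 +
            (F 0 (n + 1) + ∑ p ∈ antidiagonal n, (F (p.1 + 1) p.2 - F p.1 p.2)) := by
          rw [sum_sub_distrib]; abel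
      _ = ∑ j ∈ range (n + 2), H j 0 := by
          simp only [wz, boundary, telescope, ih, sum_range_succ _ (n + 1)]

theorem sum_range_succ_neg_one_pow {K : Type*} [DivisionRing K] [NeZero (2 : K)] (n : ℕ) :
    ∑ j ∈ range (n + 1), (-1 : K) ^ j = (1 + (-1) ^ n) / 2 := by
  rw [neg_one_geom_sum]
  rcases n.even_or_odd with hn | hn
  · rw [if_neg (Nat.not_even_iff_odd.mpr hn.add_one), hn.neg_one_pow, one_add_one_eq_two,
      div_self two_ne_zero]
  · simp [hn.add_one, hn.neg_one_pow]

/-- The hypergeometric term of which both `fnk (k + m) k` and its Wilf–Zeilberger partner are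
rational multiples. It is indexed by `k` and `m = n - k`, which avoids truncated subtraction. -/
def fnkKernel (k m : ℕ) : ℚ :=
  (-1) ^ k * 2 ^ m * m.centralBinom * (m + 2 * k)! * (2 * m + k)! / (k ! * (3 * m + 2 * k + 1)!)

/-- The Wilf–Zeilberger partner of `(k, m) ↦ fnk (k + m) k`. -/
def fnkPartner (k m : ℕ) : ℚ :=
  (2 * m + 2 * k + 1) * fnkKernel k m

theorem fnkKernel_zero_right (k : ℕ) : fnkKernel k 0 = (-1) ^ k / (2 * k + 1) := by
  simp only [fnkKernel, Nat.centralBinom_zero, mul_zero, zero_add, Nat.factorial_succ]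
  push_cast
  field_simp

theorem fnkKernel_succ_left (k m : ℕ) :
    fnkKernel (k + 1) m =
      -((m + 2 * k + 1) * (m + 2 * k + 2) * (2 * m + k + 1) /
        ((k + 1) * (3 * m + 2 * k + 2) * (3 * m + 2 * k + 3))) * fnkKernel k m := by
  simp only [fnkKernel, mul_add_one, ← add_assoc, Nat.factorial_succ,
    show m + 2 * k + 2 = m + 2 * k + 1 + 1 from rfl,
    show 3 * m + 2 * k + 2 = 3 * m + 2 * k + 1 + 1 from rfl]
  push_cast
  field_simp
  ring

theorem fnkKernel_succ_right (k m : ℕ) :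
    fnkKernel k (m + 1) =
      4 * (2 * m + 1) * (m + 2 * k + 1) * (2 * m + k + 1) * (2 * m + k + 2) /
        ((m + 1) * (3 * m + 2 * k + 2) * (3 * m + 2 * k + 3) * (3 * m + 2 * k + 4)) *
        fnkKernel k m := by
  have centralBinom_succ :
      ((m + 1).centralBinom : ℚ) = 2 * (2 * m + 1) * m.centralBinom / (m + 1) := by
    rw [eq_div_iff (by positivity), mul_comm]
    exact_mod_cast Nat.succ_mul_centralBinom_succ m
  simp only [fnkKernel, centralBinom_succ,
    show m + 1 + 2 * k = m + 2 * k + 1 by ring,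
    show 2 * (m + 1) + k = 2 * m + k + 1 + 1 by ring,
    show 3 * (m + 1) + 2 * k + 1 = 3 * m + 2 * k + 1 + 1 + 1 + 1 by ring, Nat.factorial_succ]
  push_cast
  field_simp
  ring

theorem fnk_add_left (k m : ℕ) :
    fnk (k + m) k =
      (3 * m + 2) * (m + 2 * k + 1) * (2 * m + k + 1) / ((m + 1) * (3 * m + 2 * k + 2)) *
        fnkKernel k m := by
  have catalan_eq : (catalan m : ℚ) = m.centralBinom / (m + 1) := by
    rw [eq_div_iff (by positivity), mul_comm]
    exact_mod_cast succ_mul_catalan_eq_centralBinom m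
  simp only [fnk, fnkKernel, catalan_eq, Nat.add_sub_cancel_left,
    show k + m + k + 1 = m + 2 * k + 1 by ring,
    show 2 * (k + m) - k + 1 = 2 * m + k + 1 by lia,
    show 3 * (k + m) - k + 2 = 3 * m + 2 * k + 1 + 1 by lia, Nat.factorial_succ]
  push_cast
  field_simp
  ring

theorem fnkPartner_zero_right (k : ℕ) : fnkPartner k 0 = (-1) ^ k := by
  rw [fnkPartner, fnkKernel_zero_right]
  push_cast
  field_simp
  ring

theorem fnk_zero_right_eq_fnkPartner (m : ℕ) : fnk m 0 = fnkPartner 0 m := by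
  rw [← zero_add m, fnk_add_left, zero_add, fnkPartner]
  push_cast
  field_simp
  ring

theorem fnk_sub_eq_fnkPartner_sub (k m : ℕ) :
    fnk (k + 1 + m) (k + 1) - fnk (k + m) k = fnkPartner (k + 1) m - fnkPartner k (m + 1) := by
  rw [fnk_add_left, fnk_add_left, fnkPartner, fnkPartner, fnkKernel_succ_left,
    fnkKernel_succ_right]
  push_cast
  field_simp
  ring

/-- Theorem (sum of `f_n`): `Σ_{k=0}^{n} f_n(k) = (1+(−1)^n)/2`, i.e. `1` if `n` is even
and `0` if `n` is odd. -/
theorem sum_fnk (n : ℕ) :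
    ∑ k ∈ Finset.range (n+1), fnk n k = (1 + (-1 : ℚ)^n) / 2 := by
  calc ∑ k ∈ range (n + 1), fnk n k
      = ∑ p ∈ antidiagonal n, fnk n p.1 :=
        (Nat.sum_antidiagonal_eq_sum_range_succ (fun k _ ↦ fnk n k) n).symm
    _ = ∑ p ∈ antidiagonal n, fnk (p.1 + p.2) p.1 :=
        sum_congr rfl fun p hp ↦ by rw [mem_antidiagonal.mp hp]
    _ = ∑ j ∈ range (n + 1), fnkPartner j 0 :=
        sum_antidiagonal_eq_sum_range_of_wz (F := fun k m ↦ fnk (k + m) k)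
          fnk_sub_eq_fnkPartner_sub (fun m ↦ by rw [zero_add, fnk_zero_right_eq_fnkPartner]) n
    _ = ∑ j ∈ range (n + 1), (-1) ^ j := by simp only [fnkPartner_zero_right]
    _ = (1 + (-1) ^ n) / 2 := sum_range_succ_neg_one_pow n
end

section
/- For all integers n ≥ 0 and 0 ≤ i ≤ n, one has Σ_{k=0}^{n} Σ_{j=0}^{n+i−2k} g_{n,i}(k,j) = 2^{n−i}, where the inner sum runs over integers j with 0 ≤ j ≤ n+i−2k and is empty when n+i−2k < 0. -/
/-- `g_{n,i}(k,j) = 2^{k−n} · f_n(k) · binom(2n+1−i−k, j)` (with `binom(m,j) = 0` for `j > m`). -/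
def gnik (n i k j : ℕ) : ℚ :=
  fnk n k / 2^(n-k) * (Nat.choose (2*n+1-i-k) j : ℚ)

/-!
Put `l = n - k` and `t = n - i + 1`. Up to the sign `(-1)ⁿ`, the double sum is
`T(t) = ∑ₗ (3l + 2) c(n, l) V(l, t)`, where
`c(n, l) = (-1)ˡ Cₗ binom(n+l+1, 2l+1) / binom(2n+l+2, 2l+1)` and `V(l, t)` is the sum of the
first `2l + 2 - t` entries of row `l + t` of Pascal's triangle.
Pascal's rule gives `2 V(l, t) - V(l, t+1) = (3t + 1) K(l, t)` with
`K(l, t) = (l+t)! / ((2t-l)! (2l+1-t)!)`. Creative telescoping in `l` produces a first-order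
recurrence in `t` for `∑ₗ (3l + 2) c(n, l) K(l, t)`, whose coefficients force this sum to vanish for
`1 ≤ t ≤ n`; hence `T` doubles at each of these steps. The value at `t = 0`, where `V(l, 0) = 2ˡ`,
comes from a second telescoping sum, this time along a recurrence in `n`.
-/

open Finset
open scoped Nat

section Choose

variable {R : Type*} [CommRing R]

lemma cast_choose_succ_mul_sub (m r : ℕ) :
    ((m + 1).choose r : R) * (m + 1 - r) = m.choose r * (m + 1) := by
  rcases le_or_gt r (m + 1) with hr | hr
  · have h := congrArg (Nat.cast (R := R)) (Nat.choose_mul_succ_eq m r)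
    push_cast [Nat.cast_sub hr] at h
    exact h.symm
  · simp [Nat.choose_eq_zero_of_lt hr, Nat.choose_eq_zero_of_lt (by lia : m < r)]

lemma cast_choose_succ_add_two_mul (m r : ℕ) :
    ((m + 1).choose (r + 2) : R) * ((r + 1) * (r + 2)) = m.choose r * ((m + 1) * (m - r)) := by
  have absorb : ((m : R) + 1) * m.choose (r + 1) = (m + 1).choose (r + 2) * (r + 1 + 1) := by
    simpa using congrArg (Nat.cast (R := R)) (Nat.add_one_mul_choose_eq m (r + 1))
  have shift : (m.choose (r + 1) : R) * (r + 1) = m.choose r * (m - r) := by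
    rcases le_or_gt r m with hr | hr
    · have h := congrArg (Nat.cast (R := R)) (Nat.choose_succ_right_eq m r)
      push_cast [Nat.cast_sub hr] at h
      exact h
    · simp [Nat.choose_eq_zero_of_lt hr, Nat.choose_eq_zero_of_lt (by lia : m < r + 1)]
  linear_combination ((m : R) + 1) * shift - ((r : R) + 1) * absorb

lemma two_mul_sum_range_choose_sub_sum_range_choose_succ (m e : ℕ) :
    2 * ∑ j ∈ range (e + 1), (m.choose j : R) - ∑ j ∈ range e, ((m + 1).choose j : R)
      = m.choose e + (m + 1).choose e := by
  induction e with
  | zero => norm_num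
  | succ e ih =>
    rw [sum_range_succ, sum_range_succ (fun j ↦ ((m + 1).choose j : R)), Nat.choose_succ_succ' m e]
    push_cast
    linear_combination ih

end Choose

lemma add_two_mul_catalan_succ (l : ℕ) :
    (l + 2) * catalan (l + 1) = 2 * (2 * l + 1) * catalan l := by
  refine Nat.eq_of_mul_eq_mul_left l.succ_pos ?_
  calc (l + 1) * ((l + 2) * catalan (l + 1))
      = (l + 1) * (l + 1).centralBinom := by rw [← succ_mul_catalan_eq_centralBinom]
    _ = 2 * (2 * l + 1) * l.centralBinom := Nat.succ_mul_centralBinom_succ l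
    _ = (l + 1) * (2 * (2 * l + 1) * catalan l) := by
        rw [← succ_mul_catalan_eq_centralBinom]; ring

/-- The reciprocal factorial `1 / z!`, extended by `0` to negative integers as `1 / Γ(z + 1)` is.
This makes the first-order recurrence `invFactorial_sub_one` hold without side conditions. -/
def invFactorial (z : ℤ) : ℚ := if z < 0 then 0 else (z.toNat ! : ℚ)⁻¹

lemma invFactorial_of_neg {z : ℤ} (hz : z < 0) : invFactorial z = 0 := if_pos hz

@[simp]
lemma invFactorial_natCast (m : ℕ) : invFactorial m = (m ! : ℚ)⁻¹ := by simp [invFactorial]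

lemma invFactorial_sub_one (z : ℤ) : invFactorial (z - 1) = z * invFactorial z := by
  rcases lt_trichotomy z 0 with hz | rfl | hz
  · simp [invFactorial_of_neg hz, invFactorial_of_neg (by lia : z - 1 < 0)]
  · simp [invFactorial_of_neg]
  · obtain ⟨m, rfl⟩ : ∃ m : ℕ, z = (m + 1 : ℕ) := ⟨(z - 1).toNat, by lia⟩
    have hm : ((m + 1 : ℕ) : ℤ) - 1 = m := by simp
    rw [hm, invFactorial_natCast, invFactorial_natCast, Nat.factorial_succ]
    push_cast
    field_simp

lemma cast_choose_eq_factorial_mul_invFactorial (m e : ℕ) :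
    (m.choose e : ℚ) = m ! * invFactorial e * invFactorial (m - e) := by
  rcases le_or_gt e m with he | he
  · rw [← Nat.cast_sub he, invFactorial_natCast, invFactorial_natCast, Nat.cast_choose ℚ he]
    field_simp
  · simp [Nat.choose_eq_zero_of_lt he, invFactorial_of_neg (by lia : (m : ℤ) - e < 0)]

/-- The sum of the first `2l + 2 - t` entries of row `l + t` of Pascal's triangle: the inner sum of
the theorem, with `l = n - k` and `t = n - i + 1`. It is empty for `t ≥ 2l + 2`. -/
def truncatedRowSum (l t : ℕ) : ℚ := ∑ j ∈ range (2 * l + 2 - t), ((l + t).choose j : ℚ)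

/-- The number `(l + t)! / ((2t - l)! (2l + 1 - t)!)`, zero when one of the arguments `2t - l` and
`2l + 1 - t` is negative. Multiplied by `3t + 1`, it measures by how much `truncatedRowSum l` fails
to double from `t` to `t + 1`. -/
def doublingDefect (l t : ℕ) : ℚ :=
  (l + t)! * invFactorial (2 * t - l) * invFactorial (2 * l + 1 - t)

lemma truncatedRowSum_zero_right (l : ℕ) : truncatedRowSum l 0 = 2 ^ l := by
  have vanish : ∀ j ≥ l + 1, (l.choose j : ℚ) = 0 := fun j hj ↦ by
    simp [Nat.choose_eq_zero_of_lt hj]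
  calc truncatedRowSum l 0 = ∑ j ∈ range (l + 1), (l.choose j : ℚ) :=
        eventually_constant_sum vanish (by lia)
    _ = 2 ^ l := mod_cast Nat.sum_range_choose l

lemma two_mul_truncatedRowSum_sub (l t : ℕ) :
    2 * truncatedRowSum l t - truncatedRowSum l (t + 1) = (3 * t + 1) * doublingDefect l t := by
  rcases lt_or_ge (2 * l + 1) t with ht | ht
  · simp [truncatedRowSum, doublingDefect, invFactorial_of_neg (by lia : 2 * (l : ℤ) + 1 - t < 0),
      (by lia : 2 * l + 2 - t = 0), (by lia : 2 * l + 2 - (t + 1) = 0)]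
  obtain ⟨e, he⟩ := Nat.exists_eq_add_of_le ht
  have lower : ((l + t : ℕ) : ℤ) - e = 2 * t - l - 1 := by lia
  have lower_succ : ((l + t + 1 : ℕ) : ℤ) - e = 2 * t - l := by lia
  have upper : (e : ℤ) = 2 * l + 1 - t := by lia
  have pascal := two_mul_sum_range_choose_sub_sum_range_choose_succ (R := ℚ) (l + t) e
  rw [cast_choose_eq_factorial_mul_invFactorial, cast_choose_eq_factorial_mul_invFactorial,
    lower, lower_succ, upper, invFactorial_sub_one, Nat.factorial_succ] at pascal
  rw [truncatedRowSum, truncatedRowSum, doublingDefect, ← add_assoc,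
    (by lia : 2 * l + 2 - t = e + 1), (by lia : 2 * l + 2 - (t + 1) = e), pascal]
  push_cast
  ring

lemma doublingDefect_zero_zero : doublingDefect 0 0 = 1 := by
  simp [doublingDefect, invFactorial]

lemma doublingDefect_succ_zero (l : ℕ) : doublingDefect (l + 1) 0 = 0 := by
  simp [doublingDefect, invFactorial_of_neg (by lia : -1 + -(l : ℤ) < 0)]

/-- The coefficient `(-1)ˡ Cₗ binom(n+l+1, 2l+1) / binom(2n+l+2, 2l+1)`. Up to the factor
`(-1)ⁿ (3l + 2)` it is `2^(k-n) f_n(k)` at `k = n - l`. It vanishes for `l > n`. -/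
def catalanCoeff (n l : ℕ) : ℚ :=
  (-1) ^ l * catalan l * (n + l + 1).choose (2 * l + 1) / (2 * n + l + 2).choose (2 * l + 1)

lemma catalanCoeff_zero_right (n : ℕ) : catalanCoeff n 0 = 1 / 2 := by
  simp only [catalanCoeff, pow_zero, catalan_zero, Nat.cast_one, one_mul, mul_zero, zero_add,
    add_zero, Nat.choose_one_right, Nat.cast_add, Nat.cast_mul, Nat.cast_ofNat]
  field_simp

lemma catalanCoeff_eq_zero_of_lt {n l : ℕ} (h : n < l) : catalanCoeff n l = 0 := by
  simp [catalanCoeff, Nat.choose_eq_zero_of_lt (by lia : n + l + 1 < 2 * l + 1)]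

lemma catalanCoeff_succ_right (n l : ℕ) :
    (l + 2) * (4 * (n + 1) ^ 2 - (l + 1) ^ 2) * catalanCoeff n (l + 1)
      = -2 * (2 * l + 1) * ((n + 1) ^ 2 - (l + 1) ^ 2) * catalanCoeff n l := by
  rcases lt_or_ge n l with h | h
  · simp [catalanCoeff_eq_zero_of_lt h, catalanCoeff_eq_zero_of_lt (by lia : n < l + 1)]
  have num := cast_choose_succ_add_two_mul (R := ℚ) (n + l + 1) (2 * l + 1)
  have den := cast_choose_succ_add_two_mul (R := ℚ) (2 * n + l + 2) (2 * l + 1)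
  have hcat : ((l : ℚ) + 2) * catalan (l + 1) = 2 * (2 * l + 1) * catalan l :=
    mod_cast add_two_mul_catalan_succ l
  have den_ne : ((2 * n + l + 2).choose (2 * l + 1) : ℚ) ≠ 0 :=
    mod_cast (Nat.choose_pos (by lia)).ne'
  have den_succ_ne : ((2 * n + l + 2 + 1).choose (2 * l + 1 + 2) : ℚ) ≠ 0 :=
    mod_cast (Nat.choose_pos (by lia)).ne'
  rw [catalanCoeff, catalanCoeff, ← add_assoc, ← add_assoc,
    (by lia : 2 * (l + 1) + 1 = 2 * l + 1 + 2), (by lia : 2 * n + l + 1 + 2 = 2 * n + l + 2 + 1),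
    mul_div_assoc', mul_div_assoc', div_eq_div_iff den_succ_ne den_ne, pow_succ]
  generalize ((n + l + 1 + 1).choose (2 * l + 1 + 2) : ℚ) = numSucc at *
  generalize ((2 * n + l + 2 + 1).choose (2 * l + 1 + 2) : ℚ) = denSucc at *
  push_cast at num den
  linear_combination
    (-1) ^ l * ((l + 2) * catalan (l + 1) * numSucc) * den
      - (-1) ^ l * (numSucc * denSucc * (2 * l + 2) * (2 * l + 3)) * hcat
      - (-1) ^ l * (2 * (2 * l + 1) * catalan l * denSucc) * num

lemma catalanCoeff_succ_left (n l : ℕ) :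
    (n + 1 - l) * (2 * n + l + 3) * (2 * n + l + 4) * catalanCoeff (n + 1) l
      = (n + l + 2) * (2 * n + 2 - l) * (2 * n + 3 - l) * catalanCoeff n l := by
  rcases lt_or_ge n l with h | h
  · rw [catalanCoeff_eq_zero_of_lt h, mul_zero]
    rcases (Nat.succ_le_of_lt h).eq_or_lt with rfl | h
    · simp
    · rw [catalanCoeff_eq_zero_of_lt h, mul_zero]
  have num := cast_choose_succ_mul_sub (R := ℚ) (n + l + 1) (2 * l + 1)
  have den := cast_choose_succ_mul_sub (R := ℚ) (2 * n + l + 2) (2 * l + 1)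
  have den_succ := cast_choose_succ_mul_sub (R := ℚ) (2 * n + l + 3) (2 * l + 1)
  have den_ne : ((2 * n + l + 2).choose (2 * l + 1) : ℚ) ≠ 0 :=
    mod_cast (Nat.choose_pos (by lia)).ne'
  have den_add_two_ne : ((2 * n + l + 3 + 1).choose (2 * l + 1) : ℚ) ≠ 0 :=
    mod_cast (Nat.choose_pos (by lia)).ne'
  rw [catalanCoeff, catalanCoeff, (by lia : n + 1 + l + 1 = n + l + 1 + 1),
    (by lia : 2 * (n + 1) + l + 2 = 2 * n + l + 3 + 1),
    mul_div_assoc', mul_div_assoc', div_eq_div_iff den_add_two_ne den_ne]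
  generalize ((2 * n + l + 3 + 1).choose (2 * l + 1) : ℚ) = denAddTwo at *
  push_cast at num den den_succ
  linear_combination (-1) ^ l * catalan l *
    ((2 * n + l + 3) * (2 * n + l + 4) * (2 * n + l + 2).choose (2 * l + 1) * num
      - (n + l + 2) * (n + l + 1).choose (2 * l + 1)
        * ((2 * n + l + 4) * den + (2 * n + 2 - l) * den_succ))

/-- The linear functional `u ↦ ∑ₗ (3l + 2) c(n, l) u(l)`, where `c` is `catalanCoeff`. -/
def catalanFunctional (n : ℕ) : (ℕ → ℚ) →ₗ[ℚ] ℚ :=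
  ∑ l ∈ range (n + 1), ((3 * l + 2) * catalanCoeff n l) • LinearMap.proj l

lemma catalanFunctional_apply (n : ℕ) (u : ℕ → ℚ) :
    catalanFunctional n u = ∑ l ∈ range (n + 1), (3 * l + 2) * catalanCoeff n l * u l := by
  simp [catalanFunctional]

/-- The Zeilberger certificate for the recurrence of `∑ₗ (3l + 2) c(n, l) 2ˡ` in `n`: a function of
`l` whose forward difference is `(3l + 2) (c(n, l) + c(n+1, l)) 2ˡ`. -/
def twoPowCertificate (n l : ℕ) : ℚ :=
  -(2 * n + 3) * (l + 1) * (2 * n + l + 4) / ((2 * n + 3 - l) * (n + l + 2))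
    * (catalanCoeff (n + 1) l * 2 ^ l)

lemma twoPowCertificate_zero_right (n : ℕ) : twoPowCertificate n 0 = -1 := by
  simp only [twoPowCertificate, catalanCoeff_zero_right, Nat.cast_zero, zero_add, add_zero,
    sub_zero, pow_zero]
  field_simp
  ring

lemma twoPowCertificate_eq_zero_of_lt {n l : ℕ} (h : n + 1 < l) : twoPowCertificate n l = 0 := by
  simp [twoPowCertificate, catalanCoeff_eq_zero_of_lt h]

lemma twoPowCertificate_succ_sub {n l : ℕ} (hl : l ≤ n + 1) :
    twoPowCertificate n (l + 1) - twoPowCertificate n l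
      = (3 * l + 2) * catalanCoeff n l * 2 ^ l + (3 * l + 2) * catalanCoeff (n + 1) l * 2 ^ l := by
  have hl' : (l : ℚ) ≤ n + 1 := mod_cast hl
  have hsub_two : 2 * ((n : ℚ) + 1) - l ≠ 0 := by linarith
  have hsub_three : 2 * (n : ℚ) + 3 - l ≠ 0 := by linarith
  have coeff_left : catalanCoeff n l = (n + 1 - l) * (2 * n + l + 3) * (2 * n + l + 4)
      / ((n + l + 2) * (2 * (n + 1) - l) * (2 * n + 3 - l)) * catalanCoeff (n + 1) l := by
    rw [div_mul_eq_mul_div,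
      eq_div_iff (mul_ne_zero (mul_ne_zero (by positivity) hsub_two) hsub_three)]
    linear_combination -catalanCoeff_succ_left n l
  have coeff_right : catalanCoeff (n + 1) (l + 1) = -2 * (2 * l + 1) * (n + l + 3) * (n + 1 - l)
      / ((l + 2) * (2 * n + l + 5) * (2 * n + 3 - l)) * catalanCoeff (n + 1) l := by
    have h := catalanCoeff_succ_right (n + 1) l
    push_cast at h
    field_simp
    linear_combination h
  rw [twoPowCertificate, twoPowCertificate, coeff_left, coeff_right, pow_succ]
  push_cast
  rw [(by ring : 2 * (n : ℚ) + 3 - (l + 1) = 2 * (n + 1) - l)]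
  field_simp
  ring

lemma catalanFunctional_two_pow_add_succ (n : ℕ) :
    catalanFunctional n (2 ^ ·) + catalanFunctional (n + 1) (2 ^ ·) = 1 := by
  have extend : catalanFunctional n (2 ^ ·)
      = ∑ l ∈ range (n + 2), (3 * l + 2) * catalanCoeff n l * 2 ^ l := by
    rw [sum_range_succ, catalanCoeff_eq_zero_of_lt n.lt_succ_self, catalanFunctional_apply]
    simp
  calc catalanFunctional n (2 ^ ·) + catalanFunctional (n + 1) (2 ^ ·)
      = ∑ l ∈ range (n + 2), (twoPowCertificate n (l + 1) - twoPowCertificate n l) := by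
        rw [extend, catalanFunctional_apply, ← sum_add_distrib]
        exact sum_congr rfl fun l hl ↦
          (twoPowCertificate_succ_sub (Nat.lt_succ_iff.mp (mem_range.mp hl))).symm
    _ = 1 := by
        rw [sum_range_sub, twoPowCertificate_zero_right,
          twoPowCertificate_eq_zero_of_lt (n + 1).lt_succ_self]
        norm_num

lemma two_mul_catalanFunctional_two_pow (n : ℕ) :
    2 * catalanFunctional n (2 ^ ·) = 1 + (-1) ^ n := by
  induction n with
  | zero => norm_num [catalanFunctional_apply, catalanCoeff_zero_right]
  | succ n ih =>
    rw [pow_succ]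
    linear_combination 2 * catalanFunctional_two_pow_add_succ n - ih

lemma catalanFunctional_doublingDefect_zero (n : ℕ) :
    catalanFunctional n (doublingDefect · 0) = 1 := by
  simp [catalanFunctional_apply, sum_range_succ', doublingDefect_succ_zero,
    doublingDefect_zero_zero, catalanCoeff_zero_right]

/-- The Zeilberger certificate for the recurrence of `∑ₗ (3l + 2) c(n, l) K(l, t)` in `t`, where `K`
is `doublingDefect`: its forward difference in `l` is the combination of summands at `t` and `t + 1`
in `defectCertificate_succ_sub`. -/
def defectCertificate (n t l : ℕ) : ℚ :=
  -3 * (t + 1) * (l + 1) * (4 * (n + 1) ^ 2 - l ^ 2) * catalanCoeff n l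
    * ((l + t)! * invFactorial (2 * t + 2 - l) * invFactorial (2 * l - t - 1))

lemma defectCertificate_zero_right (n t : ℕ) : defectCertificate n t 0 = 0 := by
  simp [defectCertificate, invFactorial_of_neg (by lia : -(t : ℤ) - 1 < 0)]

lemma defectCertificate_eq_zero_of_lt {n l : ℕ} (t : ℕ) (h : n < l) :
    defectCertificate n t l = 0 := by
  simp [defectCertificate, catalanCoeff_eq_zero_of_lt h]

lemma defectCertificate_succ_sub (n t l : ℕ) :
    defectCertificate n t (l + 1) - defectCertificate n t l
      = t * (4 * (n + 1) ^ 2 - (t + 1) ^ 2)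
          * ((3 * l + 2) * catalanCoeff n l * doublingDefect l t)
        + 2 * (2 * t + 3) * ((n + 1) ^ 2 - (t + 1) ^ 2)
          * ((3 * l + 2) * catalanCoeff n l * doublingDefect l (t + 1)) := by
  have lower_one := invFactorial_sub_one (2 * t + 2 - l)
  have lower_two := invFactorial_sub_one (2 * t + 2 - l - 1)
  have upper_one := invFactorial_sub_one (2 * l + 1 - t)
  have upper_two := invFactorial_sub_one (2 * l + 1 - t - 1)
  rw [lower_one] at lower_two
  rw [upper_one] at upper_two
  rw [defectCertificate, defectCertificate, doublingDefect, doublingDefect,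
    (by lia : l + 1 + t = l + t + 1), (by lia : l + (t + 1) = l + t + 1), Nat.factorial_succ,
    (by lia : 2 * (t : ℤ) + 2 - (l + 1 : ℕ) = 2 * t + 2 - l - 1),
    (by lia : 2 * ((l + 1 : ℕ) : ℤ) - t - 1 = 2 * l + 1 - t),
    (by lia : 2 * (l : ℤ) - t - 1 = 2 * l + 1 - t - 1 - 1),
    (by lia : 2 * (t : ℤ) - l = 2 * t + 2 - l - 1 - 1),
    (by lia : 2 * ((t + 1 : ℕ) : ℤ) - l = 2 * t + 2 - l),
    (by lia : 2 * (l : ℤ) + 1 - (t + 1 : ℕ) = 2 * l + 1 - t - 1),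
    lower_two, lower_one, upper_two, upper_one]
  push_cast
  linear_combination -3 * (t + 1) * ((l + t + 1) * (l + t)! * (2 * t + 2 - l)
    * invFactorial (2 * t + 2 - l) * invFactorial (2 * l + 1 - t)) * catalanCoeff_succ_right n l

lemma catalanFunctional_doublingDefect_succ (n t : ℕ) :
    t * (4 * (n + 1) ^ 2 - (t + 1) ^ 2) * catalanFunctional n (doublingDefect · t)
      + 2 * (2 * t + 3) * ((n + 1) ^ 2 - (t + 1) ^ 2)
        * catalanFunctional n (doublingDefect · (t + 1)) = 0 := by
  rw [catalanFunctional_apply, catalanFunctional_apply, mul_sum, mul_sum, ← sum_add_distrib]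
  simp only [← defectCertificate_succ_sub]
  rw [sum_range_sub, defectCertificate_zero_right,
    defectCertificate_eq_zero_of_lt t n.lt_succ_self, sub_zero]

lemma catalanFunctional_doublingDefect_eq_zero {n t : ℕ} (ht : 1 ≤ t) (htn : t ≤ n) :
    catalanFunctional n (doublingDefect · t) = 0 := by
  have leading_ne_zero {s : ℕ} (hs : s < n) :
      2 * (2 * (s : ℚ) + 3) * ((n + 1) ^ 2 - (s + 1) ^ 2) ≠ 0 := by
    have : (s : ℚ) < n := mod_cast hs
    have : (0 : ℚ) < (n + 1) ^ 2 - (s + 1) ^ 2 := by nlinarith [s.cast_nonneg (α := ℚ)]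
    positivity
  induction t, ht using Nat.le_induction with
  | base =>
    have recurrence := catalanFunctional_doublingDefect_succ n 0
    rw [Nat.cast_zero, zero_mul, zero_mul, zero_add] at recurrence
    exact (mul_eq_zero.mp recurrence).resolve_left (mod_cast leading_ne_zero htn)
  | succ s _ ih =>
    have recurrence := catalanFunctional_doublingDefect_succ n s
    rw [ih (by lia), mul_zero, zero_add] at recurrence
    exact (mul_eq_zero.mp recurrence).resolve_left (leading_ne_zero htn)

lemma catalanFunctional_truncatedRowSum_succ (n t : ℕ) :
    catalanFunctional n (truncatedRowSum · (t + 1))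
      = 2 * catalanFunctional n (truncatedRowSum · t)
        - (3 * t + 1) * catalanFunctional n (doublingDefect · t) := by
  have pointwise : (truncatedRowSum · (t + 1))
      = (2 : ℚ) • (truncatedRowSum · t) - (3 * t + 1 : ℚ) • (doublingDefect · t) := by
    funext l
    simp only [Pi.sub_apply, Pi.smul_apply, smul_eq_mul]
    linear_combination -two_mul_truncatedRowSum_sub l t
  rw [pointwise, map_sub, map_smul, map_smul, smul_eq_mul, smul_eq_mul]

lemma catalanFunctional_truncatedRowSum {n s : ℕ} (hs : s ≤ n) :
    catalanFunctional n (truncatedRowSum · (s + 1)) = (-1) ^ n * 2 ^ s := by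
  induction s with
  | zero =>
    rw [catalanFunctional_truncatedRowSum_succ, catalanFunctional_doublingDefect_zero]
    simp only [truncatedRowSum_zero_right, two_mul_catalanFunctional_two_pow]
    simp
  | succ s ih =>
    rw [catalanFunctional_truncatedRowSum_succ,
      catalanFunctional_doublingDefect_eq_zero (by lia) hs, ih (by lia)]
    ring

lemma fnk_add_left_div_two_pow (l k : ℕ) :
    fnk (l + k) k / 2 ^ l = (-1) ^ (l + k) * ((3 * l + 2) * catalanCoeff (l + k) l) := by
  have num : ((l + k + l + 1).choose (2 * l + 1) : ℚ)
      = (l + k + l + 1)! / ((2 * l + 1)! * k !) := by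
    rw [(by lia : l + k + l + 1 = 2 * l + 1 + k), Nat.cast_add_choose]
  have den : ((2 * (l + k) + l + 2).choose (2 * l + 1) : ℚ)
      = (2 * (l + k) + l + 2)! / ((2 * l + 1)! * (l + k + k + 1)!) := by
    rw [(by lia : 2 * (l + k) + l + 2 = 2 * l + 1 + (l + k + k + 1)), Nat.cast_add_choose]
  have sign : (-1 : ℚ) ^ k = (-1) ^ (l + k) * (-1) ^ l := by
    rw [pow_add, mul_right_comm, ← mul_pow]
    simp
  rw [fnk, catalanCoeff, num, den, sign, Nat.add_sub_cancel,
    (by lia : 2 * (l + k) - k + 1 = l + k + l + 1),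
    (by lia : 3 * (l + k) - k + 2 = 2 * (l + k) + l + 2)]
  push_cast
  field_simp
  ring

lemma sum_range_gnik {n i l k : ℕ} (hi : i ≤ n) (hlk : l + k = n) :
    ∑ j ∈ range (n + i + 1 - 2 * k), gnik n i k j
      = (-1) ^ n * ((3 * l + 2) * catalanCoeff n l * truncatedRowSum l (n - i + 1)) := by
  subst hlk
  simp only [gnik, Nat.add_sub_cancel]
  rw [← mul_sum, fnk_add_left_div_two_pow, truncatedRowSum,
    (by lia : 2 * l + 2 - (l + k - i + 1) = l + k + i + 1 - 2 * k),
    (by lia : l + (l + k - i + 1) = 2 * (l + k) + 1 - i - k)]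
  ring

/-- For all `n ≥ 0` and `0 ≤ i ≤ n`:
`Σ_{k=0}^{n} Σ_{j=0}^{n+i−2k} g_{n,i}(k,j) = 2^{n−i}` (inner sum empty when `n+i−2k < 0`). -/
theorem sum_gnik (n i : ℕ) (hi : i ≤ n) :
    ∑ k ∈ Finset.range (n+1), ∑ j ∈ Finset.range (n+i+1-2*k), gnik n i k j
      = 2^(n-i) := by
  calc ∑ k ∈ range (n + 1), ∑ j ∈ range (n + i + 1 - 2 * k), gnik n i k j
      = ∑ l ∈ range (n + 1), ∑ j ∈ range (n + i + 1 - 2 * (n - l)), gnik n i (n - l) j :=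
        (sum_range_reflect _ _).symm
    _ = (-1) ^ n * catalanFunctional n (truncatedRowSum · (n - i + 1)) := by
        rw [catalanFunctional_apply, mul_sum]
        refine sum_congr rfl fun l hl ↦ sum_range_gnik hi ?_
        have := mem_range.mp hl
        lia
    _ = 2 ^ (n - i) := by
        rw [catalanFunctional_truncatedRowSum (n.sub_le i), ← mul_assoc, ← mul_pow]
        simp
end
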